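/- Let L be a finite-dimensional Lie algebra over ℂ carrying a nondegenerate symmetric invariant bilinear form B (invariance: B(⁅a,b⁆,c) = B(a,⁅b,c⁆) for all a,b,c ∈ L). Let x ∈ L be such that ad x is diagonalizable with all eigenvalues in ½ℤ; for j ∈ ½ℤ let g_j denote the eigenspace of ad x with eigenvalue j, so that L = ⊕_{j ∈ ½ℤ} g_j. Let f ∈ g_{−1} and suppose (x,f) is a good pair, i.e. the centralizer L^f = {a ∈ L : ⁅f,a⁆ = 0} is contained in ⊕_{j ≤ 0} g_j. Set M = ⊕_{j ≤ 1/2} g_j and g₋ = ⊕_{j < 0} g_j. Then the restriction of ad f to M has image exactly g₋ and kernel exactly L^f; that is, the sequence 0 → L^f → M →^{ad f} g₋ → 0 is exact. -/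

import Mathlib

/-- The exact sequence `0 → L^f → ⊕_{j ≤ 1/2} g_j → g₋ → 0` (Section 1, before (1.12)):
for a good pair `(x,f)`, the restriction of `ad f` to `M = ⊕_{j ≤ 1/2} g_j` has image
exactly `g₋ = ⊕_{j < 0} g_j` and kernel exactly the centralizer `L^f`. -/
theorem good_pair_exact_sequence
    {L : Type*} [LieRing L] [LieAlgebra ℂ L] [FiniteDimensional ℂ L]
    (B : L →ₗ[ℂ] L →ₗ[ℂ] ℂ)
    (hsymm : ∀ a b, B a b = B b a)
    (hinv : ∀ a b c, B ⁅a, b⁆ c = B a ⁅b, c⁆)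
    (hnd : ∀ a, (∀ b, B a b = 0) → a = 0)
    (x : L) (g : ℤ → Submodule ℂ L)
    (hg : ∀ k : ℤ, g k = Module.End.eigenspace (LieAlgebra.ad ℂ L x) ((k : ℂ) / 2))
    (hdiag : (⨆ k : ℤ, g k) = ⊤)
    (f : L) (hf : f ∈ g (-2))
    (hgood : ∀ a : L, ⁅f, a⁆ = 0 → a ∈ ⨆ k ≤ (0 : ℤ), g k)
    (M gm : Submodule ℂ L)
    (hM : M = ⨆ k ≤ (1 : ℤ), g k) (hgm : gm = ⨆ k < (0 : ℤ), g k) :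
    Submodule.map (LieAlgebra.ad ℂ L f) M = gm ∧
      LinearMap.ker (LieAlgebra.ad ℂ L f) ≤ M := by
  have hmem : ∀ k a, a ∈ g k ↔ ⁅x, a⁆ = ((k : ℂ) / 2) • a := by
    intro k a
    rw [hg, Module.End.mem_eigenspace_iff, LieAlgebra.ad_apply]
  have hshift : ∀ k a, a ∈ g k → ⁅f, a⁆ ∈ g (k - 2) := by
    intro k a ha
    rw [hmem] at ha hf ⊢
    rw [leibniz_lie, ha, hf, smul_lie, lie_smul, ← add_smul]
    congr 1
    push_cast
    ring
  have horth : ∀ j k a b, a ∈ g j → b ∈ g k → j + k ≠ 0 → B a b = 0 := by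
    intro j k a b ha hb hjk
    rw [hmem] at ha hb
    have h1 := hinv a x b
    rw [← lie_skew, ha, hb] at h1
    simp only [map_neg, map_smul, LinearMap.neg_apply, LinearMap.smul_apply, smul_eq_mul] at h1
    have h2 : ((j + k : ℤ) : ℂ) * B a b = 0 := by
      push_cast
      linear_combination (-2) * h1
    rcases mul_eq_zero.1 h2 with h | h
    · exact absurd (by exact_mod_cast h) hjk
    · exact h
  have hind : iSupIndep g := by
    have h := (Module.End.eigenspaces_iSupIndep (LieAlgebra.ad ℂ L x)).comp
      (f := fun k : ℤ => (k : ℂ) / 2) (by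
        intro a b hab
        have : (a : ℂ) = b := by
          have h' : (a : ℂ) / 2 = b / 2 := hab
          linear_combination 2 * h'
        exact_mod_cast this)
    have he : g = (Module.End.eigenspace (LieAlgebra.ad ℂ L x)) ∘ fun k : ℤ => (k : ℂ) / 2 := by
      funext k
      exact hg k
    rw [he]
    exact h
  have horth2 : ∀ a ∈ ⨆ k ≤ (0 : ℤ), g k, ∀ b ∈ gm, B a b = 0 := by
    have h1 : ∀ k < (0 : ℤ), ∀ b ∈ g k, (⨆ k ≤ (0 : ℤ), g k) ≤ LinearMap.ker (B b) := by
      intro k hk b hb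
      refine iSup₂_le fun j hj a ha => ?_
      exact horth k j b a hb ha (by omega)
    intro a ha b hb
    have h2 : gm ≤ LinearMap.ker (B a) := by
      rw [hgm]
      refine iSup₂_le fun k hk b hb => ?_
      rw [LinearMap.mem_ker, hsymm]
      exact h1 k hk b hb ha
    exact h2 hb
  have hsurj : Function.Surjective B := by
    refine (LinearMap.injective_iff_surjective_of_finrank_eq_finrank
      (f := B) (Subspace.dual_finrank_eq (K := ℂ) (V := L)).symm).1 ?_
    refine (injective_iff_map_eq_zero B).2 fun a ha => hnd a fun b => ?_
    rw [ha, LinearMap.zero_apply]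
  have hrange : gm ≤ LinearMap.range (LieAlgebra.ad ℂ L f) := by
    intro y hy
    by_contra hn
    obtain ⟨φ, hφ, hle⟩ := Submodule.exists_le_ker_of_notMem hn
    obtain ⟨a, rfl⟩ := hsurj φ
    refine hφ (horth2 a (hgood a ?_) y hy)
    rw [← lie_skew, neg_eq_zero]
    refine hnd _ fun c => ?_
    rw [hinv]
    exact hle ⟨c, rfl⟩
  refine ⟨le_antisymm ?_ ?_, ?_⟩
  · rw [Submodule.map_le_iff_le_comap, hM]
    refine iSup₂_le fun k hk a ha => ?_
    rw [Submodule.mem_comap, LieAlgebra.ad_apply, hgm]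
    exact Submodule.mem_iSup_of_mem (k - 2)
      (Submodule.mem_iSup_of_mem (by omega) (hshift k a ha))
  · intro y hy
    obtain ⟨a, rfl⟩ := hrange hy
    have htop : a ∈ M ⊔ ⨆ k > (1 : ℤ), g k := by
      have : (⊤ : Submodule ℂ L) ≤ M ⊔ ⨆ k > (1 : ℤ), g k := by
        rw [← hdiag, hM]
        refine iSup_le fun k => ?_
        rcases le_or_gt k 1 with h | h
        · exact le_sup_of_le_left (le_iSup₂_of_le k h le_rfl)
        · exact le_sup_of_le_right (le_iSup₂_of_le k h le_rfl)
      exact this trivial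
    obtain ⟨m, hm, n, hn, rfl⟩ := Submodule.mem_sup.1 htop
    have hmg : LieAlgebra.ad ℂ L f m ∈ gm := by
      have : M ≤ gm.comap (LieAlgebra.ad ℂ L f) := by
        rw [hM]
        refine iSup₂_le fun k hk a ha => ?_
        rw [Submodule.mem_comap, LieAlgebra.ad_apply, hgm]
        exact Submodule.mem_iSup_of_mem (k - 2)
          (Submodule.mem_iSup_of_mem (by omega) (hshift k a ha))
      exact this hm
    have hng : LieAlgebra.ad ℂ L f n ∈ ⨆ k ≥ (0 : ℤ), g k := by
      have : (⨆ k > (1 : ℤ), g k) ≤ (⨆ k ≥ (0 : ℤ), g k).comap (LieAlgebra.ad ℂ L f) := by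
        refine iSup₂_le fun k hk a ha => ?_
        rw [Submodule.mem_comap, LieAlgebra.ad_apply]
        exact Submodule.mem_iSup_of_mem (k - 2)
          (Submodule.mem_iSup_of_mem (by omega) (hshift k a ha))
      exact this hn
    have hng2 : LieAlgebra.ad ℂ L f n ∈ gm := by
      rw [map_add] at hy
      exact (Submodule.add_mem_iff_right _ hmg).1 hy
    have hdis : Disjoint gm (⨆ k ≥ (0 : ℤ), g k) := by
      rw [hgm]
      exact hind.disjoint_biSup_biSup (s := {k | k < (0 : ℤ)}) (t := {k | k ≥ (0 : ℤ)})
        (Set.disjoint_left.2 fun k (h1 : k < 0) (h2 : k ≥ 0) => absurd h1 (not_lt.2 h2))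
    have h0 := Submodule.disjoint_def.1 hdis _ hng2 hng
    rw [map_add, h0, add_zero]
    exact Submodule.mem_map_of_mem hm
  · intro a ha
    have h := hgood a ha
    rw [hM]
    exact (iSup₂_le fun k hk => le_iSup₂_of_le k (by omega) le_rfl :
      (⨆ k ≤ (0 : ℤ), g k) ≤ ⨆ k ≤ (1 : ℤ), g k) h
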